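/- Let f be a real binary quintic with distinct roots (squarefree over ℂ). Then the real rank of f is 5 if and only if f has five distinct real roots. -/

import Mathlib

open MvPolynomial

noncomputable section

/-- The real linear binary form `a·x + b·y`. -/
def lin (a b : ℝ) : MvPolynomial (Fin 2) ℝ := C a * X 0 + C b * X 1

/-- `f` is a sum of `r` terms `cⱼ · ℓⱼ^d` with `ℓⱼ` nonzero real linear forms. -/
def HasDecomp (f : MvPolynomial (Fin 2) ℝ) (d r : ℕ) : Prop :=
  ∃ c a b : Fin r → ℝ, (∀ j, (a j, b j) ≠ (0, 0)) ∧
    f = ∑ j, C (c j) * lin (a j) (b j) ^ d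

/-- The real (symmetric) rank of a binary form of degree `d`:
the least number of `d`-th powers of real linear forms needed to write `f`. -/
def realRank (f : MvPolynomial (Fin 2) ℝ) (d : ℕ) : ℕ :=
  sInf {r | HasDecomp f d r}

/-- The set of real projective roots of a binary form. -/
def projRoots (f : MvPolynomial (Fin 2) ℝ) : Set (Projectivization ℝ (Fin 2 → ℝ)) :=
  {p | eval p.rep f = 0}

/-- `f` is a product of `d` pairwise non-proportional real linear forms,
i.e. `f` has `d` distinct real roots. -/
def SplitsDistinct (f : MvPolynomial (Fin 2) ℝ) (d : ℕ) : Prop :=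
  ∃ a b : Fin d → ℝ, (∀ j, (a j, b j) ≠ (0, 0)) ∧
    (∀ i j, i ≠ j → a i * b j ≠ a j * b i) ∧
    f = ∏ j, lin (a j) (b j)

/-- `f` has distinct roots, i.e. it is squarefree as a complex polynomial. -/
def SquarefreeC (f : MvPolynomial (Fin 2) ℝ) : Prop :=
  Squarefree (MvPolynomial.map (algebraMap ℝ ℂ) f)

/-- The linear change of variables of `f` by the matrix `A`: `f(A(x,y))`. -/
def subst (A : Matrix (Fin 2) (Fin 2) ℝ) (f : MvPolynomial (Fin 2) ℝ) :
    MvPolynomial (Fin 2) ℝ :=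
  aeval (fun i => C (A i 0) * X 0 + C (A i 1) * X 1) f

/-- The complex rank of a real binary form of degree `d`. -/
def complexRank (f : MvPolynomial (Fin 2) ℝ) (d : ℕ) : ℕ :=
  sInf {r | ∃ a b : Fin r → ℂ, (∀ j, (a j, b j) ≠ (0, 0)) ∧
    MvPolynomial.map (algebraMap ℝ ℂ) f = ∑ j, (C (a j) * X 0 + C (b j) * X 1) ^ d}


lemma ev_lin (a b x y : ℝ) : eval ![x, y] (lin a b) = a * x + b * y := by
  simp [lin]

lemma ext2 {f g : MvPolynomial (Fin 2) ℝ} (h : ∀ x y, eval ![x, y] f = eval ![x, y] g) :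
    f = g := by
  apply MvPolynomial.funext
  intro v
  have : v = ![v 0, v 1] := by
    ext i; fin_cases i <;> rfl
  rw [this]; exact h _ _

/-- functional decomposition -/
def FD (F : ℝ → ℝ → ℝ) (r : ℕ) : Prop :=
  ∃ c a b : Fin r → ℝ, (∀ j, (a j, b j) ≠ (0, 0)) ∧
    ∀ x y, F x y = ∑ j, c j * (a j * x + b j * y) ^ 5

lemma hasDecomp_iff (f : MvPolynomial (Fin 2) ℝ) (r : ℕ) :
    HasDecomp f 5 r ↔ FD (fun x y => eval ![x, y] f) r := by
  constructor
  · rintro ⟨c, a, b, h, rfl⟩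
    refine ⟨c, a, b, h, fun x y => ?_⟩
    simp [ev_lin]
  · rintro ⟨c, a, b, h, h2⟩
    refine ⟨c, a, b, h, ext2 fun x y => ?_⟩
    refine (h2 x y).trans ?_
    simp [ev_lin]

lemma FD_smul {F : ℝ → ℝ → ℝ} {n : ℕ} (k : ℝ) (h : FD F n) : FD (fun x y => k * F x y) n := by
  obtain ⟨c, a, b, h1, h2⟩ := h
  refine ⟨fun j => k * c j, a, b, h1, fun x y => ?_⟩
  simp only [h2, Finset.mul_sum, mul_assoc]

lemma FD_subst {F : ℝ → ℝ → ℝ} {n : ℕ} (p q r s : ℝ) (hd : p * s - q * r ≠ 0)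
    (h : FD (fun x y => F (p * x + q * y) (r * x + s * y)) n) : FD F n := by
  obtain ⟨c, a, b, h1, h2⟩ := h
  refine ⟨c, fun j => (a j * s - b j * r) / (p * s - q * r),
    fun j => (- a j * q + b j * p) / (p * s - q * r), fun j hj => ?_, fun x y => ?_⟩
  · simp only [Prod.mk.injEq, div_eq_zero_iff, hd, or_false] at hj
    apply h1 j
    obtain ⟨h3, h4⟩ := hj
    have ha : a j * (p * s - q * r) = 0 := by linear_combination p * h3 + r * h4
    have hb : b j * (p * s - q * r) = 0 := by linear_combination q * h3 + s * h4
    simp only [mul_eq_zero, hd, or_false] at ha hb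
    rw [ha, hb]
  · obtain ⟨N, hN⟩ : ∃ N, N = p * s - q * r := ⟨_, rfl⟩
    simp only [← hN] at hd ⊢
    have := h2 ((s * x - q * y) / N) ((- r * x + p * y) / N)
    have e1 : p * ((s * x - q * y) / N) +
      q * ((- r * x + p * y) / N) = x := by field_simp; rw [hN]; ring
    have e2 : r * ((s * x - q * y) / N) +
      s * ((- r * x + p * y) / N) = y := by field_simp; rw [hN]; ring
    simp only [e1, e2] at this
    rw [this]
    refine Finset.sum_congr rfl fun j _ => ?_
    congr 2
    field_simp
    ring

lemma coeffs {f : MvPolynomial (Fin 2) ℝ} (hf : f.IsHomogeneous 5) :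
    ∃ e0 e1 e2 e3 e4 e5 : ℝ, ∀ x y, eval ![x, y] f =
      e0 * x ^ 5 + e1 * x ^ 4 * y + e2 * x ^ 3 * y ^ 2 + e3 * x ^ 2 * y ^ 3 + e4 * x * y ^ 4
        + e5 * y ^ 5 := by
  rw [f.as_sum]
  apply Finset.sum_induction _ (fun f : MvPolynomial (Fin 2) ℝ => 
    ∃ e0 e1 e2 e3 e4 e5 : ℝ, ∀ x y, eval ![x, y] f =
      e0 * x ^ 5 + e1 * x ^ 4 * y + e2 * x ^ 3 * y ^ 2 + e3 * x ^ 2 * y ^ 3 + e4 * x * y ^ 4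
        + e5 * y ^ 5)
  · rintro g h ⟨a0, a1, a2, a3, a4, a5, ha⟩ ⟨b0, b1, b2, b3, b4, b5, hb⟩
    refine ⟨a0 + b0, a1 + b1, a2 + b2, a3 + b3, a4 + b4, a5 + b5, fun x y => ?_⟩
    rw [map_add, ha, hb]; ring
  · exact ⟨0, 0, 0, 0, 0, 0, by simp⟩
  · intro d hd
    have h5 := hf (mem_support_iff.1 hd)
    have h6 : d 0 + d 1 = 5 := by
      rw [← h5, Finsupp.weight_apply, Finsupp.sum_fintype] <;> simp
    have hev : ∀ x y, eval ![x, y] (monomial d (coeff d f)) = coeff d f * (x ^ d 0 * y ^ d 1) := by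
      intro x y
      rw [eval_monomial, Finsupp.prod_fintype] <;> simp
    generalize coeff d f = k at hev
    generalize d 0 = m at *
    generalize d 1 = n at *
    have hm : m ≤ 5 := by omega
    interval_cases m
    · obtain rfl : n = 5 := by omega
      exact ⟨0, 0, 0, 0, 0, k, fun x y => by rw [hev]; ring⟩
    · obtain rfl : n = 4 := by omega
      exact ⟨0, 0, 0, 0, k, 0, fun x y => by rw [hev]; ring⟩
    · obtain rfl : n = 3 := by omega
      exact ⟨0, 0, 0, k, 0, 0, fun x y => by rw [hev]; ring⟩
    · obtain rfl : n = 2 := by omega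
      exact ⟨0, 0, k, 0, 0, 0, fun x y => by rw [hev]; ring⟩
    · obtain rfl : n = 1 := by omega
      exact ⟨0, k, 0, 0, 0, 0, fun x y => by rw [hev]; ring⟩
    · obtain rfl : n = 0 := by omega
      exact ⟨k, 0, 0, 0, 0, 0, fun x y => by rw [hev]; ring⟩

lemma sq_not_dvd {f q : MvPolynomial (Fin 2) ℝ} (hsf : SquarefreeC f) (h : q * q ∣ f)
    (h0 : eval ![0, 0] q = 0) : False := by
  have h1 : MvPolynomial.map (algebraMap ℝ ℂ) q * MvPolynomial.map (algebraMap ℝ ℂ) q ∣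
      MvPolynomial.map (algebraMap ℝ ℂ) f := by
    rw [← map_mul]; exact map_dvd _ h
  have h2 := (hsf _ h1).map (eval (fun i => (algebraMap ℝ ℂ) (![0, 0] i)))
  have h3 : eval (fun i => (algebraMap ℝ ℂ) (![0, 0] i)) (MvPolynomial.map (algebraMap ℝ ℂ) q)
      = algebraMap ℝ ℂ (eval ![0, 0] q) := by
    rw [eval_map]
    exact (MvPolynomial.eval₂_comp_left (algebraMap ℝ ℂ) (RingHom.id ℝ) ![0, 0] q).symm
  rw [h3, h0] at h2
  simp at h2

lemma K4 (g0 p q r s g5 : ℝ) (h1 : p * r - q ^ 2 ≠ 0) (h2 : q * s - r ^ 2 ≠ 0)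
    (hD : 0 < (p * s - q * r) ^ 2 - 4 * (p * r - q ^ 2) * (q * s - r ^ 2)) :
    FD (fun x y => g0 * x ^ 5 + 5 * p * x ^ 4 * y + 10 * q * x ^ 3 * y ^ 2
      + 10 * r * x ^ 2 * y ^ 3 + 5 * s * x * y ^ 4 + g5 * y ^ 5) 4 := by
  obtain ⟨w, hw, hw2⟩ : ∃ w : ℝ, w ≠ 0 ∧
      w ^ 2 = (p * s - q * r) ^ 2 - 4 * (p * r - q ^ 2) * (q * s - r ^ 2) :=
    ⟨√_, (Real.sqrt_pos.2 hD).ne', Real.sq_sqrt hD.le⟩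
  -- roots of h1 m^2 - (ps-qr) m + h2
  obtain ⟨m, hm⟩ : ∃ m, m = (p * s - q * r + w) / (2 * (p * r - q ^ 2)) := ⟨_, rfl⟩
  obtain ⟨n, hn⟩ : ∃ n, n = (p * s - q * r - w) / (2 * (p * r - q ^ 2)) := ⟨_, rfl⟩
  have hS : (p * r - q ^ 2) * (m + n) = p * s - q * r := by
    rw [hm, hn]; field_simp; ring
  have hP : (p * r - q ^ 2) * (m * n) = q * s - r ^ 2 := by
    have : 4 * (p * r - q ^ 2) * ((p * r - q ^ 2) * (m * n)) = 
      4 * (p * r - q ^ 2) * (q * s - r ^ 2) := by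
      have : 4 * (p * r - q ^ 2) * ((p * r - q ^ 2) * (m * n)) = (p * s - q * r)^2 - w^2 := by
        rw [hm, hn]; field_simp; ring
      rw [this, hw2]; ring
    exact mul_left_cancel₀ (mul_ne_zero (by norm_num) h1) this
  have hmn : m - n ≠ 0 := by
    have : m - n = w / (p * r - q ^ 2) := by rw [hm, hn]; field_simp; ring
    rw [this]; exact div_ne_zero hw h1
  have hm0 : m ≠ 0 := by rintro h; rw [h] at hP; apply h2; linear_combination -hP
  have hn0 : n ≠ 0 := by rintro h; rw [h] at hP; apply h2; linear_combination -hP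
  have hr : r = (m + n) * q - m * n * p := by
    apply mul_left_cancel₀ h1; linear_combination -q * hS + p * hP
  have hs : s = (m + n) * r - m * n * q := by
    apply mul_left_cancel₀ h1; linear_combination -r * hS + q * hP
  clear hm hn hS hP h1 h2 hD hw2
  obtain ⟨l, hl⟩ : ∃ l, l = (q - n * p) / (m - n) := ⟨_, rfl⟩
  obtain ⟨k, hk⟩ : ∃ k, k = (m * p - q) / (m - n) := ⟨_, rfl⟩
  have e1 : p = l + k := by rw [hl, hk]; field_simp; ring
  have e2 : q = l * m + k * n := by rw [hl, hk]; field_simp; ring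
  have e3 : r = l * m ^ 2 + k * n ^ 2 := by rw [hr, e1, e2]; ring
  have e4 : s = l * m ^ 3 + k * n ^ 3 := by rw [hs, e3, e2]; ring
  clear hr hs hl hk
  refine ⟨![l / m, k / n, g0 - l / m - k / n, g5 - l * m ^ 4 - k * n ^ 4], ![1, 1, 1, 0],
    ![m, n, 0, 1], ?_, fun x y => ?_⟩
  · intro j; fin_cases j <;> simp
  · simp only [Fin.sum_univ_four]
    simp [e1, e2, e3, e4]
    field_simp
    ring

lemma K5 (g0 p q r s g5 : ℝ) (h1 : r - p ≠ 0) (h2 : s - q ≠ 0) (h3 : (s - q) - (r - p) ≠ 0)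
    (h4 : (s - q) + (r - p) ≠ 0) :
    FD (fun x y => g0 * x ^ 5 + 5 * p * x ^ 4 * y + 10 * q * x ^ 3 * y ^ 2
      + 10 * r * x ^ 2 * y ^ 3 + 5 * s * x * y ^ 4 + g5 * y ^ 5) 5 := by
  obtain ⟨m, hm⟩ : ∃ m, m = (s - q) / (r - p) := ⟨_, rfl⟩
  have hm0 : m ≠ 0 := by rw [hm]; exact div_ne_zero h2 h1
  have hs : s = q + m * (r - p) := by rw [hm]; field_simp; ring
  have hm1 : m ^ 2 - 1 ≠ 0 := by
    have : m ^ 2 - 1 = ((s - q) - (r - p)) * ((s - q) + (r - p)) / (r - p) ^ 2 := by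
      rw [hm]; field_simp; ring
    rw [this]; exact div_ne_zero (mul_ne_zero h3 h4) (pow_ne_zero _ h1)
  obtain ⟨l, hl⟩ : ∃ l, l = (r - p) / (m ^ 2 - 1) := ⟨_, rfl⟩
  have hr : r = p + l * (m ^ 2 - 1) := by rw [hl]; field_simp; ring
  clear hm h1 h2 h3 h4 hl
  obtain ⟨u, hu⟩ : ∃ u, u = (p - l + (q - m * l)) / 2 := ⟨_, rfl⟩
  obtain ⟨v, hv⟩ : ∃ v, v = (p - l - (q - m * l)) / 2 := ⟨_, rfl⟩
  have e1 : p = u + v + l := by rw [hu, hv]; ring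
  have e2 : q = u - v + m * l := by rw [hu, hv]; ring
  have e3 : r = u + v + m ^ 2 * l := by rw [hr, e1]; ring
  have e4 : s = u - v + m ^ 3 * l := by rw [hs, e3, e2, e1]; ring
  clear hu hv hr hs
  refine ⟨![u, -v, l / m, g0 - u + v - l / m, g5 - u - v - l * m ^ 4], ![1, 1, 1, 1, 0],
    ![1, -1, m, 0, 1], ?_, fun x y => ?_⟩
  · intro j; fin_cases j <;> simp
  · simp only [Fin.sum_univ_five]
    simp [e1, e2, e3, e4]
    field_simp
    ring

open Polynomial in
lemma zeros_main (r : ℕ) : ∀ d, r ≤ d → ∀ (c a b : Fin r → ℝ), (∀ j, (a j, b j) ≠ (0, 0)) →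
    ∀ S : Finset (ℝ × ℝ), (∀ z ∈ S, ∀ w ∈ S, z ≠ w → z.1 * w.2 ≠ w.1 * z.2) →
    (∀ z ∈ S, z ≠ 0) → r + 1 ≤ S.card →
    (∀ z ∈ S, ∑ j, c j * (a j * z.1 + b j * z.2) ^ d = 0) →
    ∀ x y, ∑ j, c j * (a j * x + b j * y) ^ d = 0 := by
  classical
  induction r with
  | zero => intros; simp
  | succ r ih =>
    intro d hd c a b hab S hS hS0 hcard hz
    obtain ⟨k, rfl⟩ : ∃ k, d = k + 1 := ⟨d - 1, by omega⟩
    obtain ⟨p, hp⟩ : ∃ p, p = a 0 := ⟨_, rfl⟩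
    obtain ⟨q, hq⟩ : ∃ q, q = b 0 := ⟨_, rfl⟩
    have hn : 0 < p ^ 2 + q ^ 2 := by
      have := hab 0
      rw [← hp, ← hq] at this
      by_contra hcon
      apply this
      have h1 : p ^ 2 = 0 := by nlinarith [sq_nonneg p, sq_nonneg q]
      have h2 : q ^ 2 = 0 := by nlinarith [sq_nonneg p, sq_nonneg q]
      simp at h1 h2
      simp [h1, h2]
    obtain ⟨G, hG⟩ : ∃ G : ℝ → ℝ → ℝ, ∀ x y, G x y = ∑ j, c j * (a j * x + b j * y) ^ (k + 1) :=
      ⟨_, fun _ _ => rfl⟩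
    simp only [← hG] at hz ⊢
    have hhom : ∀ t x y, G (t * x) (t * y) = t ^ (k + 1) * G x y := by
      intro t x y
      rw [hG, hG, Finset.mul_sum]
      refine Finset.sum_congr rfl fun j _ => ?_
      rw [show a j * (t * x) + b j * (t * y) = t * (a j * x + b j * y) by ring, mul_pow]; ring
    obtain ⟨D, hD⟩ : ∃ D : ℝ → ℝ → ℝ, ∀ x y, D x y = ∑ j : Fin r,
      (c j.succ * (a j.succ * q - b j.succ * p)) * (a j.succ * x + b j.succ * y) ^ k :=
      ⟨_, fun _ _ => rfl⟩
    have hD' : ∀ x y, D x y = ∑ j, c j * (a j * q - b j * p) * (a j * x + b j * y) ^ k := by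
      intro x y
      rw [Fin.sum_univ_succ, hD, ← hp, ← hq]; ring
    have hDv : D q (-p) = G q (-p) := by
      rw [hD', hG]
      refine Finset.sum_congr rfl fun j _ => ?_
      ring
    let P : ℝ[X] := ∑ j, Polynomial.C (c j) * (Polynomial.C (a j * q - b j * p) * Polynomial.X +
      Polynomial.C (a j * p + b j * q)) ^ (k + 1)
    have hP : ∀ s, P.eval s = G (s * q + p) (-s * p + q) := by
      intro s
      simp only [P, eval_finsetSum, hG]
      refine Finset.sum_congr rfl fun j _ => ?_
      simp
      left
      ring
    have hP' : ∀ s, P.derivative.eval s = (k + 1) * D (s * q + p) (-s * p + q) := by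
      intro s
      simp only [P, derivative_sum, eval_finsetSum, hD', Finset.mul_sum]
      refine Finset.sum_congr rfl fun j _ => ?_
      simp [derivative_pow]
      ring
    -- decomposition of a vector
    have hvec : ∀ z1 z2, p * z1 + q * z2 ≠ 0 → G z1 z2 = ((p * z1 + q * z2) / (p ^ 2 + q ^ 2)) ^ (k + 1) *
        P.eval ((q * z1 - p * z2) / (p * z1 + q * z2)) := by
      intro z1 z2 hne
      rw [hP, ← hhom]
      obtain ⟨N, hN⟩ : ∃ N, N = p * z1 + q * z2 := ⟨_, rfl⟩
      rw [← hN] at hne ⊢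
      congr 1
      · field_simp; rw [hN]; ring
      · field_simp; rw [hN]; ring
    have hpar : ∀ z1 z2, p * z1 + q * z2 = 0 → ∃ e, z1 = e * q ∧ z2 = e * (-p) := by
      intro z1 z2 h
      refine ⟨(q * z1 - p * z2) / (p ^ 2 + q ^ 2), ?_, ?_⟩
      · field_simp; linear_combination p * h
      · field_simp; linear_combination q * h
    let S0 := S.filter (fun z => p * z.1 + q * z.2 ≠ 0)
    have hcard2 : S.card ≤ S0.card + 1 := by
      have h1 := S.card_filter_add_card_filter_not (fun z => p * z.1 + q * z.2 ≠ 0)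
      have h2 : (S.filter (fun z => ¬ (p * z.1 + q * z.2 ≠ 0))).card ≤ 1 := by
        rw [Finset.card_le_one]
        intro z hz w hw
        simp only [Finset.mem_filter, not_not] at hz hw
        by_contra hne
        apply hS z hz.1 w hw.1 hne
        obtain ⟨e, e1, e2⟩ := hpar _ _ hz.2
        obtain ⟨e', e3, e4⟩ := hpar _ _ hw.2
        rw [e1, e2, e3, e4]; ring
      change _ ≤ (S.filter _).card + 1
      omega
    have hroot : ∀ z ∈ S0, P.eval ((q * z.1 - p * z.2) / (p * z.1 + q * z.2)) = 0 := by
      intro z hz'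
      simp only [S0, Finset.mem_filter] at hz'
      have := hz z hz'.1
      rw [hvec _ _ hz'.2] at this
      rcases mul_eq_zero.1 this with h | h
      · exact absurd h (pow_ne_zero _ (div_ne_zero hz'.2 hn.ne'))
      · exact h
    have hPd : P.derivative = 0 := by
      by_contra hne
      have hPne : P ≠ 0 := by rintro h; rw [h] at hne; simp at hne
      have hc1 : S0.card ≤ P.roots.toFinset.card := by
        apply Finset.card_le_card_of_injOn (fun z => (q * z.1 - p * z.2) / (p * z.1 + q * z.2))
        · intro z hz
          simp [hPne, hroot z hz]
        · intro z hz w hw h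
          by_contra hzw
          simp only [S0, Finset.coe_filter, Set.mem_ofPred_eq] at hz hw
          apply hS z hz.1 w hw.1 hzw
          simp only at h
          rw [div_eq_div_iff hz.2 hw.2] at h
          apply mul_left_cancel₀ hn.ne'
          linear_combination h
      have hc2 := Polynomial.card_roots_toFinset_le_derivative P
      let S1 := P.derivative.roots.toFinset.image (fun s : ℝ => (s * q + p, -s * p + q))
      have hinj : ∀ s t : ℝ, (s * q + p) * (-t * p + q) = (t * q + p) * (-s * p + q) → s = t := by
        intro s t h
        apply mul_left_cancel₀ hn.ne'
        linear_combination h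
      have hS1card : S1.card = P.derivative.roots.toFinset.card := by
        apply Finset.card_image_of_injective
        intro s t h
        simp only [Prod.mk.injEq] at h
        apply hinj
        rw [h.1, h.2]
      have hS1z : ∀ z ∈ S1, D z.1 z.2 = 0 := by
        intro z hz
        simp only [S1, Finset.mem_image, Multiset.mem_toFinset, mem_roots hne, IsRoot] at hz
        obtain ⟨s, hs, rfl⟩ := hz
        rw [hP'] at hs
        exact (mul_eq_zero.1 hs).resolve_left (by positivity)
      have hS1w : ∀ z ∈ S1, p * z.1 + q * z.2 ≠ 0 := by
        intro z hz
        simp only [S1, Finset.mem_image] at hz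
        obtain ⟨s, hs, rfl⟩ := hz
        simp only
        intro h
        apply hn.ne'
        linear_combination h
      have hS1p : ∀ z ∈ S1, ∀ w ∈ S1, z ≠ w → z.1 * w.2 ≠ w.1 * z.2 := by
        intro z hz w hw hzw h
        simp only [S1, Finset.mem_image] at hz hw
        obtain ⟨s, hs, rfl⟩ := hz
        obtain ⟨t, ht, rfl⟩ := hw
        apply hzw
        rw [hinj s t h]
      have key : ∀ x y, D x y = 0 := by
        by_cases hall : S0 = S
        · have := ih k (by omega) (fun j => c j.succ * (a j.succ * q - b j.succ * p))
            (fun j => a j.succ) (fun j => b j.succ) (fun j => hab _) S1 hS1p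
            (fun z hz h => hS1w z hz (by simp [h])) (by rw [hall] at hc1; omega)
            (fun z hz => by rw [← hD]; exact hS1z z hz)
          intro x y
          rw [hD]; exact this x y
        · have hvG : D q (-p) = 0 := by
            rw [hDv]
            simp only [S0, Finset.filter_eq_self, not_forall, not_not] at hall
            obtain ⟨z, hzS, hz0⟩ := hall
            obtain ⟨e, e1, e2⟩ := hpar _ _ hz0
            have h1 := hz z hzS
            rw [e1, e2, hhom] at h1
            refine (mul_eq_zero.1 h1).resolve_left (pow_ne_zero _ fun h => ?_)
            apply hS0 z hzS
            rw [h, zero_mul] at e1 e2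
            exact Prod.ext e1 e2
          have hvne : (q, -p) ∉ S1 := by
            intro h
            apply hS1w _ h
            simp only; ring
          have := ih k (by omega) (fun j => c j.succ * (a j.succ * q - b j.succ * p))
            (fun j => a j.succ) (fun j => b j.succ) (fun j => hab _) (insert (q, -p) S1) ?_ ?_
            (by rw [Finset.card_insert_of_notMem hvne]; omega) ?_
          · intro x y
            rw [hD]; exact this x y
          · intro z hz w hw hzw
            rw [Finset.mem_insert] at hz hw
            rcases hz with rfl | hz <;> rcases hw with rfl | hw
            · exact absurd rfl hzw
            · intro h
              apply hS1w w hw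
              simp only at h
              linear_combination h
            · intro h
              apply hS1w z hz
              simp only at h
              linear_combination -h
            · exact hS1p z hz w hw hzw
          · intro z hz h
            rw [Finset.mem_insert] at hz
            rcases hz with rfl | hz
            · simp only [Prod.mk_eq_zero, neg_eq_zero] at h
              rw [h.1, h.2] at hn
              simp at hn
            · exact hS1w z hz (by simp [h])
          · intro z hz
            rw [← hD]
            rw [Finset.mem_insert] at hz
            rcases hz with rfl | hz
            · exact hvG
            · exact hS1z z hz
      apply hne
      apply Polynomial.funext
      intro s
      rw [hP', key]; simp
    have hP0 : ∀ s, P.eval s = 0 := by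
      have h1 := Polynomial.eq_C_of_derivative_eq_zero hPd
      have h2 : 0 < S0.card := by omega
      obtain ⟨z, hz⟩ := Finset.card_pos.1 h2
      have h3 := hroot z hz
      intro s
      rw [h1, Polynomial.eval_C] at h3 ⊢
      exact h3
    have hoff : ∀ x y, p * x + q * y ≠ 0 → G x y = 0 := by
      intro x y h
      rw [hvec x y h, hP0, mul_zero]
    intro x y
    by_cases h : p * x + q * y = 0
    · have hcont : Continuous (fun t => G (x + t * p) (y + t * q)) := by
        simp only [hG]; fun_prop
      have := Continuous.ext_on (dense_compl_singleton (0 : ℝ)) hcont (continuous_const (y := (0:ℝ)))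
        (fun t ht => by
          apply hoff
          intro h'
          have : t * (p ^ 2 + q ^ 2) = 0 := by linear_combination h' - h
          rcases mul_eq_zero.1 this with h | h
          · exact ht h
          · exact hn.ne' h)
      simpa using congrFun this 0
    · exact hoff x y h

/-- If `K = F(1,i) ≠ 0` then `F` is a sum of five powers. -/
lemma rank_le_five (e0 e1 e2 e3 e4 e5 : ℝ)
    (hK : (e0 + e1 * Complex.I + e2 * Complex.I ^ 2 + e3 * Complex.I ^ 3 + e4 * Complex.I ^ 4
      + e5 * Complex.I ^ 5 : ℂ) ≠ 0) :
    FD (fun x y => e0 * x ^ 5 + e1 * x ^ 4 * y + e2 * x ^ 3 * y ^ 2 + e3 * x ^ 2 * y ^ 3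
      + e4 * x * y ^ 4 + e5 * y ^ 5) 5 := by
  let T : Polynomial ℝ := Polynomial.X
  let k : ℝ → Polynomial ℝ := Polynomial.C
  let b1 := - 5*k e0*T + k e1 - 4*k e1*T^2 + 2*k e2*T - 3*k e2*T^3 + 3*k e3*T^2 - 2*k e3*T^4
    + 4*k e4*T^3 - k e4*T^5 + 5*k e5*T^4
  let b2 := 10*k e0*T^2 - 4*k e1*T + 6*k e1*T^3 + k e2 - 6*k e2*T^2 + 3*k e2*T^4 + 3*k e3*T
    - 6*k e3*T^3 + k e3*T^5 + 6*k e4*T^2 - 4*k e4*T^4 + 10*k e5*T^3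
  let b3 := - 10*k e0*T^3 + 6*k e1*T^2 - 4*k e1*T^4 - 3*k e2*T + 6*k e2*T^3 - k e2*T^5 + k e3
    - 6*k e3*T^2 + 3*k e3*T^4 + 4*k e4*T - 6*k e4*T^3 + 10*k e5*T^2
  let b4 := 5*k e0*T^4 - 4*k e1*T^3 + k e1*T^5 + 3*k e2*T^2 - 2*k e2*T^4 - 2*k e3*T + 3*k e3*T^3
    + k e4 - 4*k e4*T^2 + 5*k e5*T
  -- p = 2 b1, q = b2, r = b3, s = 2 b4
  let Q := (b3 - 2 * b1) * (2 * b4 - b2) * ((2 * b4 - b2) - (b3 - 2 * b1)) *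
    ((2 * b4 - b2) + (b3 - 2 * b1))
  obtain ⟨K, hKd⟩ : ∃ K : ℂ, K = e0 + e1 * Complex.I + e2 * Complex.I ^ 2 + e3 * Complex.I ^ 3
    + e4 * Complex.I ^ 4 + e5 * Complex.I ^ 5 := ⟨_, rfl⟩
  rw [← hKd] at hK
  have hI := Complex.I_sq
  have hI3 : Complex.I ^ 3 = - Complex.I := by rw [pow_succ, hI]; ring
  have hI4 : Complex.I ^ 4 = 1 := by rw [pow_succ, hI3]; linear_combination -hI
  have hI5 : Complex.I ^ 5 = Complex.I := by rw [pow_succ, hI4]; ring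
  rw [hI, hI3, hI4, hI5] at hKd
  have E1 : Polynomial.aeval Complex.I b1 = -5 * Complex.I * K := by
    simp [b1, k, T, hKd, hI, hI3, hI4, hI5, map_ofNat]
    linear_combination (5*e1-5*e3+5*e5) * hI
  have E2 : Polynomial.aeval Complex.I b2 = -10 * K := by
    simp [b2, k, T, hKd, hI, hI3, hI4, hI5, map_ofNat]
    ring
  have E3 : Polynomial.aeval Complex.I b3 = 10 * Complex.I * K := by
    simp [b3, k, T, hKd, hI, hI3, hI4, hI5, map_ofNat]
    linear_combination (-10*e1+10*e3-10*e5) * hI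
  have E4 : Polynomial.aeval Complex.I b4 = 5 * K := by
    simp [b4, k, T, hKd, hI, hI3, hI4, hI5, map_ofNat]
    ring
  have hQ : Q ≠ 0 := by
    intro h
    have h2 : Polynomial.aeval Complex.I Q = 0 := by rw [h]; simp
    simp only [Q, map_mul, map_sub, map_add, E1, E2, E3, E4, map_ofNat] at h2
    have h3 : (160000 : ℂ) * (Complex.I * (Complex.I ^ 2 - 1)) * K ^ 4 = 0 := by
      linear_combination -h2
    rw [hI] at h3
    have h4 : (Complex.I * (-1 - 1) : ℂ) ≠ 0 := mul_ne_zero Complex.I_ne_zero (by norm_num)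
    simp [hK] at h3
    norm_num at h3
  obtain ⟨t, ht⟩ : ∃ t : ℝ, Q.eval t ≠ 0 := by
    by_contra! hcon
    exact hQ (Polynomial.funext (by simpa using hcon))
  simp only [Q, Polynomial.eval_mul, mul_ne_zero_iff] at ht
  obtain ⟨⟨⟨h1, h2⟩, h3⟩, h4⟩ := ht
  simp only [Polynomial.eval_sub, Polynomial.eval_add, Polynomial.eval_mul,
    Polynomial.eval_ofNat] at h1 h2 h3 h4
  have := FD_smul (1 / 10) (K5 (10 * (e0 + e1*t + e2*t^2 + e3*t^3 + e4*t^4 + e5*t^5))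
    (2 * b1.eval t) (b2.eval t) (b3.eval t) (2 * b4.eval t)
    (10 * (- e0*t^5 + e1*t^4 - e2*t^3 + e3*t^2 - e4*t + e5)) h1 h2 h3 h4)
  apply FD_subst 1 (-t) t 1 (by nlinarith [sq_nonneg t])
  convert this using 3
  simp [b1, b2, b3, b4, k, T]
  ring

lemma disc_pos (p q r s : ℝ) (h : 0 < (p * r - q ^ 2) + (q * s - r ^ 2)) :
    0 < (p * s - q * r) ^ 2 - 4 * (p * r - q ^ 2) * (q * s - r ^ 2) := by
  rcases lt_or_ge 0 (p * r - q ^ 2) with h1 | h1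
  · have hp : p ≠ 0 := by rintro rfl; nlinarith [sq_nonneg q]
    have h2 : 0 < p ^ 2 := by positivity
    refine pos_of_mul_pos_right (a := p ^ 2) ?_ h2.le
    have h3 : 0 < (p * r - q ^ 2) ^ 3 := by positivity
    nlinarith [sq_nonneg (p ^ 2 * s - 3 * p * q * r + 2 * q ^ 3)]
  · have h1 : 0 < q * s - r ^ 2 := by linarith
    have hp : s ≠ 0 := by rintro rfl; nlinarith [sq_nonneg r]
    have h2 : 0 < s ^ 2 := by positivity
    refine pos_of_mul_pos_right (a := s ^ 2) ?_ h2.le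
    have h3 : 0 < (q * s - r ^ 2) ^ 3 := by positivity
    nlinarith [sq_nonneg (s ^ 2 * p - 3 * q * r * s + 2 * r ^ 3)]

lemma rank_le_four (c0 c1 c2 c3 : ℝ) (hc : ¬ (c0 = c2 ∧ c1 = c3)) :
    FD (fun x y => (x ^ 2 + y ^ 2) * (c0 * x ^ 3 + c1 * x ^ 2 * y + c2 * x * y ^ 2 + c3 * y ^ 3))
      4 := by
  let T : Polynomial ℝ := Polynomial.X
  let k : ℝ → Polynomial ℝ := Polynomial.C
  let d0 := k c0 + k c1*T + k c2*T^2 + k c3*T^3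
  let d1 := - 3*k c0*T + k c1 - 2*k c1*T^2 + 2*k c2*T - k c2*T^3 + 3*k c3*T^2
  let d2 := 3*k c0*T^2 - 2*k c1*T + k c1*T^3 + k c2 - 2*k c2*T^2 + 3*k c3*T
  let d3 := - k c0*T^3 + k c1*T^2 - k c2*T + k c3
  let H1 := (2 * d1) * (d1 + d3) - (d0 + d2) ^ 2
  let H2 := (d0 + d2) * (2 * d2) - (d1 + d3) ^ 2
  have hpos : 0 < (c0 - c2) ^ 2 + (c1 - c3) ^ 2 := by
    by_contra hcon
    apply hc
    constructor <;> nlinarith [sq_nonneg (c0 - c2), sq_nonneg (c1 - c3)]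
  have hopen : IsOpen {t : ℝ | 0 < (H1 + H2).eval t} :=
    isOpen_lt continuous_const (H1 + H2).continuous
  have hne : {t : ℝ | 0 < (H1 + H2).eval t}.Nonempty := by
    by_contra hcon
    rw [Set.not_nonempty_iff_eq_empty, Set.eq_empty_iff_forall_notMem] at hcon
    have h0 := hcon 0
    have h1 := hcon 1
    simp [H1, H2, d0, d1, d2, d3, k, T] at h0 h1
    nlinarith
  obtain ⟨K, hKd⟩ : ∃ K : ℂ, K = (c0 - c2) + (c1 - c3) * Complex.I := ⟨_, rfl⟩
  have hK : K ≠ 0 := by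
    rw [hKd]
    intro h
    have hr := congrArg Complex.re h
    have hi := congrArg Complex.im h
    simp at hr hi
    exact hc ⟨by linarith, by linarith⟩
  have hI := Complex.I_sq
  have hI3 : Complex.I ^ 3 = - Complex.I := by rw [pow_succ, hI]; ring
  have E0 : Polynomial.aeval Complex.I d0 = K := by
    simp [d0, k, T, hKd, hI, hI3, map_ofNat]; ring
  have E1 : Polynomial.aeval Complex.I d1 = -3 * Complex.I * K := by
    simp [d1, k, T, hKd, hI, hI3, map_ofNat]; linear_combination (3 * c1 - 3 * c3) * hI
  have E2 : Polynomial.aeval Complex.I d2 = -3 * K := by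
    simp [d2, k, T, hKd, hI, hI3, map_ofNat]; ring
  have E3 : Polynomial.aeval Complex.I d3 = Complex.I * K := by
    simp [d3, k, T, hKd, hI, hI3, map_ofNat]; linear_combination (- c1 + c3) * hI
  have hQ : H1 * H2 ≠ 0 := by
    intro h
    have h2 : Polynomial.aeval Complex.I (H1 * H2) = 0 := by rw [h]; simp
    simp only [H1, H2, map_mul, map_sub, map_add, map_pow, E0, E1, E2, E3, map_ofNat] at h2
    have h3 : ((12 * Complex.I ^ 2 - 4) * (12 - 4 * Complex.I ^ 2)) * K ^ 4 = 0 := by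
      linear_combination h2
    rw [hI] at h3
    simp [hK] at h3
    norm_num at h3
  have hinf : {t : ℝ | 0 < (H1 + H2).eval t}.Infinite := by
    obtain ⟨t, ht⟩ := hne
    exact infinite_of_mem_nhds t (hopen.mem_nhds ht)
  obtain ⟨t, ht, htn⟩ := (hinf.sdiff (H1 * H2).roots.toFinset.finite_toSet).nonempty
  simp only [Finset.mem_coe, Multiset.mem_toFinset, Polynomial.mem_roots hQ, Polynomial.IsRoot,
    Polynomial.eval_mul, mul_eq_zero, not_or] at htn
  obtain ⟨h1, h2⟩ := htn
  change 0 < (H1 + H2).eval t at ht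
  simp only [H1, H2, Polynomial.eval_sub, Polynomial.eval_add, Polynomial.eval_mul,
    Polynomial.eval_pow, Polynomial.eval_ofNat] at h1 h2 ht
  have := FD_smul ((1 + t ^ 2) / 10) (K4 (10 * d0.eval t) (2 * d1.eval t) (d0.eval t + d2.eval t)
    (d1.eval t + d3.eval t) (2 * d2.eval t) (10 * d3.eval t) h1 h2 (disc_pos _ _ _ _ ht))
  apply FD_subst 1 (-t) t 1 (by nlinarith [sq_nonneg t])
  convert this using 3
  simp [d0, d1, d2, d3, k, T]
  ring

lemma f_ne_zero {f : MvPolynomial (Fin 2) ℝ} (hsf : SquarefreeC f) : f ≠ 0 := by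
  rintro rfl
  exact sq_not_dvd (q := X 0) hsf (dvd_zero _) (by simp)

lemma splits_of_prod {f : MvPolynomial (Fin 2) ℝ} (hsf : SquarefreeC f) (a b : Fin 5 → ℝ)
    (h : f = ∏ j, lin (a j) (b j)) : SplitsDistinct f 5 := by
  have hne : ∀ j, (a j, b j) ≠ (0, 0) := by
    intro j hj
    simp only [Prod.mk.injEq] at hj
    apply f_ne_zero hsf
    rw [h]
    apply Finset.prod_eq_zero (Finset.mem_univ j)
    simp [lin, hj.1, hj.2]
  refine ⟨a, b, hne, fun i j hij hab => ?_, h⟩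
  have hdv : lin (a j) (b j) ∣ lin (a i) (b i) := by
    by_cases haj : a j = 0
    · have hbj : b j ≠ 0 := fun hb => hne j (by rw [haj, hb])
      have hai : a i = 0 := by
        rw [haj, zero_mul] at hab
        exact (mul_eq_zero.1 hab).resolve_right hbj
      refine ⟨C (b i / b j), ext2 fun x y => ?_⟩
      simp [ev_lin, hai, haj]
      field_simp
    · refine ⟨C (a i / a j), ext2 fun x y => ?_⟩
      simp [ev_lin]
      field_simp
      linear_combination (-y) * hab
  refine sq_not_dvd (q := lin (a j) (b j)) hsf ?_ (by simp [ev_lin])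
  rw [h, ← Finset.mul_prod_erase _ _ (Finset.mem_univ i),
    ← Finset.mul_prod_erase _ _ (Finset.mem_erase.2 ⟨hij.symm, Finset.mem_univ j⟩), ← mul_assoc]
  exact Dvd.dvd.mul_right (mul_dvd_mul hdv dvd_rfl) _

lemma quintic_split {f : MvPolynomial (Fin 2) ℝ} (hsf : SquarefreeC f) (e0 e1 e2 e3 e4 e5 : ℝ)
    (he : ∀ x y, eval ![x, y] f = e0 * x ^ 5 + e1 * x ^ 4 * y + e2 * x ^ 3 * y ^ 2
      + e3 * x ^ 2 * y ^ 3 + e4 * x * y ^ 4 + e5 * y ^ 5)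
    (hr : ∀ z : ℂ, e0 * z ^ 5 + e1 * z ^ 4 + e2 * z ^ 3 + e3 * z ^ 2 + e4 * z + e5 = 0 →
      z.im = 0) : SplitsDistinct f 5 := by
  obtain ⟨p, hp⟩ : ∃ p : Polynomial ℝ, p = Polynomial.C e0 * Polynomial.X ^ 5
    + Polynomial.C e1 * Polynomial.X ^ 4 + Polynomial.C e2 * Polynomial.X ^ 3
    + Polynomial.C e3 * Polynomial.X ^ 2 + Polynomial.C e4 * Polynomial.X + Polynomial.C e5 :=
    ⟨_, rfl⟩
  have hpe : ∀ t, p.eval t = e0 * t ^ 5 + e1 * t ^ 4 + e2 * t ^ 3 + e3 * t ^ 2 + e4 * t + e5 := by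
    intro t; simp [hp]
  have hs : p.Splits := by
    apply Polynomial.Splits.of_splits_map (algebraMap ℝ ℂ) (IsAlgClosed.splits _)
    intro z hz
    have hz2 := Polynomial.isRoot_of_mem_roots hz
    simp [hp, Polynomial.IsRoot] at hz2
    have := hr z hz2
    exact ⟨z.re, by apply Complex.ext <;> simp [this]⟩
  have hcard := hs.natDegree_eq_card_roots
  have hprod := fun t => hs.eval_eq_prod_roots t
  by_cases h0 : e0 = 0
  · by_cases h1 : e1 = 0
    · exfalso
      refine sq_not_dvd (q := X 1) hsf ⟨C e2 * X 0 ^ 3 + C e3 * X 0 ^ 2 * X 1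
        + C e4 * X 0 * X 1 ^ 2 + C e5 * X 1 ^ 3, ext2 fun x y => ?_⟩ (by simp)
      rw [he]; simp [h0, h1]; ring
    · have hdeg : p.natDegree = 4 := by rw [hp, h0]; simp; compute_degree!
      have hlc : p.leadingCoeff = e1 := by
        rw [Polynomial.leadingCoeff, hdeg, hp, h0]
        simp [Polynomial.coeff_X, Polynomial.coeff_C]
      rw [hdeg] at hcard
      obtain ⟨l, hl⟩ : ∃ l : List ℝ, p.roots = (l : Multiset ℝ) := ⟨_, (Multiset.coe_toList _).symm⟩
      rw [hl] at hcard hprod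
      have hl4 : l.length = 4 := by simpa using hcard.symm
      match l, hl4 with
      | [r0, r1, r2, r3], _ =>
        simp [hlc, hpe] at hprod
        refine splits_of_prod hsf ![0, 1, 1, 1, 1] ![e1, -r0, -r1, -r2, -r3] (ext2 fun x y => ?_)
        rw [he]
        simp [Fin.prod_univ_succ, ev_lin]
        by_cases hy : y = 0
        · subst hy; simp [h0]
        · have := hprod (x / y)
          rw [h0] at this ⊢
          field_simp at this
          linear_combination this
  · have hdeg : p.natDegree = 5 := by rw [hp]; compute_degree!
    have hlc : p.leadingCoeff = e0 := by
      rw [Polynomial.leadingCoeff, hdeg, hp]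
      simp [Polynomial.coeff_X, Polynomial.coeff_C]
    rw [hdeg] at hcard
    obtain ⟨l, hl⟩ : ∃ l : List ℝ, p.roots = (l : Multiset ℝ) := ⟨_, (Multiset.coe_toList _).symm⟩
    rw [hl] at hcard hprod
    have hl5 : l.length = 5 := by simpa using hcard.symm
    match l, hl5 with
    | [r0, r1, r2, r3, r4], _ =>
      simp [hlc, hpe] at hprod
      refine splits_of_prod hsf ![e0, 1, 1, 1, 1] ![-(e0 * r0), -r1, -r2, -r3, -r4]
        (ext2 fun x y => ?_)
      rw [he]
      simp [Fin.prod_univ_succ, ev_lin]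
      by_cases hy : y = 0
      · subst hy; simp; ring
      · have := hprod (x / y)
        field_simp at this
        linear_combination this

lemma rank_four {f : MvPolynomial (Fin 2) ℝ} (hsf : SquarefreeC f) (e0 e1 e2 e3 e4 e5 : ℝ)
    (he : ∀ x y, eval ![x, y] f = e0 * x ^ 5 + e1 * x ^ 4 * y + e2 * x ^ 3 * y ^ 2
      + e3 * x ^ 2 * y ^ 3 + e4 * x * y ^ 4 + e5 * y ^ 5)
    (z : ℂ) (hz : e0 * z ^ 5 + e1 * z ^ 4 + e2 * z ^ 3 + e3 * z ^ 2 + e4 * z + e5 = 0)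
    (hzi : z.im ≠ 0) : HasDecomp f 5 4 := by
  obtain ⟨α, hα⟩ : ∃ α, α = z.re := ⟨_, rfl⟩
  obtain ⟨β, hβ⟩ : ∃ β, β = z.im := ⟨_, rfl⟩
  have hzz : z = α + β * Complex.I := by rw [hα, hβ, Complex.re_add_im]
  rw [← hβ] at hzi
  obtain ⟨k0, h0⟩ : ∃ k, k = e0 * β ^ 5 := ⟨_, rfl⟩
  obtain ⟨k1, h1⟩ : ∃ k, k = 5*e0*α*β^4+e1*β^4 := ⟨_, rfl⟩
  obtain ⟨k2, h2⟩ : ∃ k, k = 10*e0*α^2*β^3+4*e1*α*β^3+e2*β^3 := ⟨_, rfl⟩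
  obtain ⟨k3, h3⟩ : ∃ k, k = 10*e0*α^3*β^2+6*e1*α^2*β^2+3*e2*α*β^2+e3*β^2 := ⟨_, rfl⟩
  obtain ⟨k4, h4⟩ : ∃ k, k = 5*e0*α^4*β+4*e1*α^3*β+3*e2*α^2*β+2*e3*α*β+e4*β := ⟨_, rfl⟩
  obtain ⟨k5, h5⟩ : ∃ k, k = e0*α^5+e1*α^4+e2*α^3+e3*α^2+e4*α+e5 := ⟨_, rfl⟩
  have hI := Complex.I_sq
  have hI3 : Complex.I ^ 3 = - Complex.I := by rw [pow_succ, hI]; ring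
  have hI4 : Complex.I ^ 4 = 1 := by rw [pow_succ, hI3]; linear_combination -hI
  have hI5 : Complex.I ^ 5 = Complex.I := by rw [pow_succ, hI4]; ring
  have hG : ((k0 - k2 + k4 : ℝ) : ℂ) * Complex.I + ((k1 - k3 + k5 : ℝ) : ℂ) = 0 := by
    have : (k0 * Complex.I ^ 5 + k1 * Complex.I ^ 4 + k2 * Complex.I ^ 3 + k3 * Complex.I ^ 2
      + k4 * Complex.I + k5 : ℂ) = 0 := by
      rw [← hz, hzz, h0, h1, h2, h3, h4, h5]; generalize Complex.I = i; push_cast; ring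
    rw [hI, hI3, hI4, hI5] at this
    rw [← this]; push_cast; ring
  have hA : k0 - k2 + k4 = 0 := by simpa using congrArg Complex.im hG
  have hB : k1 - k3 + k5 = 0 := by simpa using congrArg Complex.re hG
  have key : ∀ x y, eval ![β * x + α * y, 0 * x + 1 * y] f = (x ^ 2 + y ^ 2) *
      (k0 * x ^ 3 + k1 * x ^ 2 * y + (k2 - k0) * x * y ^ 2 + (k3 - k1) * y ^ 3) := by
    intro x y
    rw [he]
    have e : e0 * (β * x + α * y) ^ 5 + e1 * (β * x + α * y) ^ 4 * (0 * x + 1 * y)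
      + e2 * (β * x + α * y) ^ 3 * (0 * x + 1 * y) ^ 2
      + e3 * (β * x + α * y) ^ 2 * (0 * x + 1 * y) ^ 3
      + e4 * (β * x + α * y) * (0 * x + 1 * y) ^ 4 + e5 * (0 * x + 1 * y) ^ 5 =
      k0 * x ^ 5 + k1 * x ^ 4 * y + k2 * x ^ 3 * y ^ 2 + k3 * x ^ 2 * y ^ 3 + k4 * x * y ^ 4
      + k5 * y ^ 5 := by rw [h0, h1, h2, h3, h4, h5]; ring
    rw [e]
    linear_combination x * y ^ 4 * hA + y ^ 5 * hB
  rw [hasDecomp_iff]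
  apply FD_subst β α 0 1 (by simpa using hzi)
  simp only [key]
  apply rank_le_four
  rintro ⟨hc0, hc1⟩
  refine sq_not_dvd (q := (C (1 / β) * (X 0 - C α * X 1)) ^ 2 + X 1 ^ 2) hsf
    ⟨C k0 * (C (1 / β) * (X 0 - C α * X 1)) + C k1 * X 1, ext2 fun x y => ?_⟩ (by simp)
  have := key ((x - α * y) / β) y
  rw [← hc0, ← hc1] at this
  have e : β * ((x - α * y) / β) + α * y = x := by field_simp; ring
  rw [e, zero_mul, zero_add, one_mul] at this
  rw [this]
  simp
  ring

lemma rank_ge {f : MvPolynomial (Fin 2) ℝ} (hf0 : f ≠ 0) (a b : Fin 5 → ℝ)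
    (hne : ∀ j, (a j, b j) ≠ (0, 0)) (hab : ∀ i j, i ≠ j → a i * b j ≠ a j * b i)
    (h : f = ∏ j, lin (a j) (b j)) (r : ℕ) (hr : HasDecomp f 5 r) : 5 ≤ r := by
  by_contra! hlt
  rw [hasDecomp_iff] at hr
  obtain ⟨c, u, v, huv, hF⟩ := hr
  have hinj : Function.Injective (fun j => (b j, - a j)) := by
    intro i j hij
    by_contra hc
    simp only [Prod.mk.injEq, neg_inj] at hij
    exact hab i j hc (by rw [hij.1, hij.2])
  apply hf0
  apply ext2
  intro x y
  have := zeros_main r 5 hlt.le c u v huv (Finset.univ.image (fun j => (b j, - a j))) ?_ ?_ ?_ ?_ x y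
  · rw [map_zero]; exact (hF x y).trans this
  · intro z hz w hw hzw
    simp only [Finset.mem_image, Finset.mem_univ, true_and] at hz hw
    obtain ⟨i, rfl⟩ := hz
    obtain ⟨j, rfl⟩ := hw
    have hij : i ≠ j := by rintro rfl; exact hzw rfl
    intro hh
    apply hab i j hij
    simp at hh
    linarith
  · intro z hz
    simp only [Finset.mem_image, Finset.mem_univ, true_and] at hz
    obtain ⟨i, rfl⟩ := hz
    intro hh
    simp only [Prod.mk_eq_zero, neg_eq_zero] at hh
    exact hne i (by rw [hh.1, hh.2])
  · rw [Finset.card_image_of_injective _ hinj]; simpa using hlt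
  · intro z hz
    simp only [Finset.mem_image, Finset.mem_univ, true_and] at hz
    obtain ⟨i, rfl⟩ := hz
    rw [← hF]
    simp only [h, map_prod]
    apply Finset.prod_eq_zero (Finset.mem_univ i)
    rw [ev_lin]; ring

lemma quintic_rank_le {f : MvPolynomial (Fin 2) ℝ} (hf : f.IsHomogeneous 5) (a b : Fin 5 → ℝ)
    (hne : ∀ j, (a j, b j) ≠ (0, 0))
    (h : f = ∏ j, lin (a j) (b j)) : HasDecomp f 5 5 := by
  obtain ⟨e0, e1, e2, e3, e4, e5, he⟩ := coeffs hf
  rw [hasDecomp_iff]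
  simp only [he]
  apply rank_le_five
  have hpoly : Polynomial.C e0 + Polynomial.C e1 * Polynomial.X
      + Polynomial.C e2 * Polynomial.X ^ 2 + Polynomial.C e3 * Polynomial.X ^ 3
      + Polynomial.C e4 * Polynomial.X ^ 4 + Polynomial.C e5 * Polynomial.X ^ 5
      = ∏ j, (Polynomial.C (a j) + Polynomial.C (b j) * Polynomial.X) := by
    apply Polynomial.funext
    intro t
    have h1 := he 1 t
    rw [h, map_prod] at h1
    simp only [ev_lin] at h1
    simp [Polynomial.eval_prod]
    simp at h1
    linarith
  have h2 := congrArg (Polynomial.aeval Complex.I) hpoly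
  simp only [map_add, map_mul, map_pow, map_prod, Polynomial.aeval_C, Polynomial.aeval_X,
    Complex.coe_algebraMap] at h2
  rw [h2, Finset.prod_ne_zero_iff]
  intro j _ hj
  have hre := congrArg Complex.re hj
  have him := congrArg Complex.im hj
  simp at hre him
  exact hne j (by rw [hre, him])

/-- a real binary quintic with distinct complex roots has real rank 5
iff it has five distinct real roots (is a product of five pairwise non-proportional
real linear forms). -/
theorem stmt14 (f : MvPolynomial (Fin 2) ℝ) (hf : f.IsHomogeneous 5)
    (hsf : SquarefreeC f) :
    realRank f 5 = 5 ↔ SplitsDistinct f 5 := by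
  constructor
  · intro hrank
    by_contra hns
    obtain ⟨e0, e1, e2, e3, e4, e5, he⟩ := coeffs hf
    apply hns
    apply quintic_split hsf e0 e1 e2 e3 e4 e5 he
    intro z hz
    by_contra hzi
    have h4 : realRank f 5 ≤ 4 := Nat.sInf_le (rank_four hsf e0 e1 e2 e3 e4 e5 he z hz hzi)
    omega
  · rintro ⟨a, b, hne, hab, h⟩
    have h5 := quintic_rank_le hf a b hne h
    apply le_antisymm
    · exact Nat.sInf_le h5
    · exact rank_ge (f_ne_zero hsf) a b hne hab h _ (Nat.sInf_mem (s := {r | HasDecomp f 5 r}) ⟨5, h5⟩)
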